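/- Let Λ be an artin algebra and T a finitely generated tilting Λ-module such that T^⊥ = P^⊥, where P is the class of finitely generated modules of finite projective dimension. Then P is contravariantly finite in mod Λ and findim Λ = pd T. -/

import Mathlib

open CategoryTheory

universe u

/-- The `n`-th Ext group of `A`-modules `M`, `N`. -/
noncomputable abbrev ext {A : Type u} [Ring A] (M N : ModuleCat.{u} A) (n : ℕ) : Type u :=
  ((Ext ℤ (ModuleCat.{u} A) n).obj (Opposite.op M)).obj N

/-- `Ext^i(N, M) = 0` for all `i > 0`. -/
def ExtVanish {A : Type u} [Ring A] (N M : ModuleCat.{u} A) : Prop :=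
  ∀ i, 0 < i → Subsingleton (ext N M i)

/-- `M` has projective dimension at most `n`, i.e. `Ext^i(M, -) = 0` for `i > n`. -/
def pdLE {A : Type u} [Ring A] (M : ModuleCat.{u} A) (n : ℕ) : Prop :=
  ∀ i, n < i → ∀ N : ModuleCat.{u} A, Subsingleton (ext M N i)

/-- The projective dimension of `M`, as an element of `ℕ∞` (`⊤` if infinite). -/
noncomputable def projDim {A : Type u} [Ring A] (M : ModuleCat.{u} A) : ℕ∞ :=
  sInf {d : ℕ∞ | ∃ n : ℕ, d = n ∧ pdLE M n}

/-- Membership in `𝒫`: finitely generated of finite projective dimension. -/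
def InP {A : Type u} [Ring A] (M : ModuleCat.{u} A) : Prop :=
  Module.Finite A M ∧ ∃ n, pdLE M n

/-- The finitistic dimension of `A`. -/
noncomputable def findim (A : Type u) [Ring A] : ℕ∞ :=
  sSup {d : ℕ∞ | ∃ M : ModuleCat.{u} A, InP M ∧ d = projDim M}

/-- `M` is a direct summand of `S`. -/
def IsSummand {A : Type u} [Ring A] (M S : ModuleCat.{u} A) : Prop :=
  ∃ (s : M →ₗ[A] S) (r : S →ₗ[A] M), r ∘ₗ s = LinearMap.id

/-- `M` belongs to `add 𝒳`: `M` is a direct summand of a finite direct sum of objects of `𝒳`. -/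
def InAddOf {A : Type u} [Ring A] (X : ModuleCat.{u} A → Prop) (M : ModuleCat.{u} A) : Prop :=
  ∃ (k : ℕ) (F : Fin k → ModuleCat.{u} A), (∀ i, X (F i)) ∧
    IsSummand M (ModuleCat.of A (DirectSum (Fin k) (fun i => ↥(F i))))

/-- `M` belongs to `Add T`: `M` is a direct summand of an arbitrary direct sum of copies of `T`. -/
def InAdd {A : Type u} [Ring A] (T M : ModuleCat.{u} A) : Prop :=
  ∃ ι : Type u, IsSummand M (ModuleCat.of A (DirectSum ι (fun _ => ↥T)))

/-- `M ∈ 𝒳^⊥`: `Ext^i(N, M) = 0` for all `N ∈ 𝒳` and `i > 0`. -/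
def InPerpOf {A : Type u} [Ring A] (X : ModuleCat.{u} A → Prop) (M : ModuleCat.{u} A) : Prop :=
  ∀ N, X N → ExtVanish N M

/-- `M` is Ext-injective in `𝒫`: `M ∈ 𝒫` and `Ext^1(N, M) = 0` for all `N ∈ 𝒫`. -/
def ExtInjInP {A : Type u} [Ring A] (M : ModuleCat.{u} A) : Prop :=
  InP M ∧ ∀ N : ModuleCat.{u} A, InP N → Subsingleton (ext N M 1)

/-- `M` is splitting injective in `𝒳`: every injective map `M → Y` with `Y ∈ add 𝒳` splits. -/
def SplittingInjIn {A : Type u} [Ring A] (X : ModuleCat.{u} A → Prop)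
    (M : ModuleCat.{u} A) : Prop :=
  ∀ Y : ModuleCat.{u} A, InAddOf X Y → ∀ f : M →ₗ[A] Y, Function.Injective f →
    ∃ r : Y →ₗ[A] M, r ∘ₗ f = LinearMap.id

/-- `0 → M₁ → M₂ → M₃ → 0` is a short exact sequence. -/
def ShortExact {A : Type u} [Ring A] {M₁ M₂ M₃ : ModuleCat.{u} A}
    (f : M₁ →ₗ[A] M₂) (g : M₂ →ₗ[A] M₃) : Prop :=
  Function.Injective f ∧ Function.Exact f g ∧ Function.Surjective g

/-- `f : XM → M` is a right `𝒳`-approximation of `M`. -/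
def IsRightApprox {A : Type u} [Ring A] (X : ModuleCat.{u} A → Prop)
    {XM M : ModuleCat.{u} A} (f : XM →ₗ[A] M) : Prop :=
  X XM ∧ ∀ Y : ModuleCat.{u} A, X Y → ∀ g : Y →ₗ[A] M, ∃ h : Y →ₗ[A] XM, f ∘ₗ h = g

/-- `f : XM → M` is a minimal right `𝒳`-approximation. -/
def IsMinimalRightApprox {A : Type u} [Ring A] (X : ModuleCat.{u} A → Prop)
    {XM M : ModuleCat.{u} A} (f : XM →ₗ[A] M) : Prop :=
  IsRightApprox X f ∧ ∀ g : XM →ₗ[A] XM, f ∘ₗ g = f → Function.Bijective g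

/-- `𝒳` is contravariantly finite in `mod A`. -/
def ContravariantlyFinite {A : Type u} [Ring A] (X : ModuleCat.{u} A → Prop) : Prop :=
  ∀ M : ModuleCat.{u} A, Module.Finite A M →
    ∃ (XM : ModuleCat.{u} A) (f : XM →ₗ[A] M), IsRightApprox X f

/-- `M` is an indecomposable module: nonzero, and its only idempotent endomorphisms
are `0` and the identity. -/
def Indec {A : Type u} [Ring A] (M : ModuleCat.{u} A) : Prop :=
  (¬ Subsingleton M) ∧ ∀ e : M →ₗ[A] M, e ∘ₗ e = e → e = 0 ∨ e = LinearMap.id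

/-- `L` admits a finite coresolution `0 → L → C^0 → ⋯ → C^n → 0` with all `C^i ∈ add T`. -/
def HasAddCoresolution {A : Type u} [Ring A] (T L : ModuleCat.{u} A) : Prop :=
  ∃ (C : ℕ → ModuleCat.{u} A) (d : ∀ i, C i →ₗ[A] C (i+1)) (f : L →ₗ[A] C 0),
    Function.Injective f ∧ Function.Exact f (d 0) ∧
    (∀ i, Function.Exact (d i) (d (i+1))) ∧
    (∀ i, InAddOf (fun X => X = T) (C i)) ∧
    (∃ m, ∀ i, m ≤ i → Subsingleton (C i))

/-- `T` is a tilting `A`-module. -/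
def IsTilting {A : Type u} [Ring A] (T : ModuleCat.{u} A) : Prop :=
  Module.Finite A T ∧ (∃ n, pdLE T n) ∧ ExtVanish T T ∧
    HasAddCoresolution T (ModuleCat.of A A)

/-- `𝒳` is a resolving subcategory of `mod A`. -/
def Resolving {A : Type u} [Ring A] (X : ModuleCat.{u} A → Prop) : Prop :=
  (∀ M : ModuleCat.{u} A, Module.Finite A M → Module.Projective A M → X M) ∧
  (∀ (M₁ M₂ M₃ : ModuleCat.{u} A) (f : M₁ →ₗ[A] M₂) (g : M₂ →ₗ[A] M₃),
      ShortExact f g → X M₁ → X M₃ → X M₂) ∧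
  (∀ (M₁ M₂ M₃ : ModuleCat.{u} A) (f : M₁ →ₗ[A] M₂) (g : M₂ →ₗ[A] M₃),
      ShortExact f g → X M₂ → X M₃ → X M₁)

/-- `F` is a complete irredundant family of representatives of the isomorphism classes of
indecomposable Ext-injective modules in `𝒫`. -/
def IsCompleteExtInjFamily {A : Type u} [Ring A] {ι : Type u}
    (F : ι → ModuleCat.{u} A) : Prop :=
  (∀ i, Indec (F i) ∧ ExtInjInP (F i)) ∧
  (∀ M : ModuleCat.{u} A, Indec M → ExtInjInP M → ∃ i, Nonempty (M ≃ₗ[A] F i)) ∧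
  (∀ i j, Nonempty (F i ≃ₗ[A] F j) → i = j)

/-- `I` is a complete set of pairwise non-isomorphic indecomposable injective modules. -/
def IsCompleteIndecInjFamily {A : Type u} [Ring A] {n : ℕ}
    (I : Fin n → ModuleCat.{u} A) : Prop :=
  (∀ j, Module.Finite A (I j) ∧ Module.Injective A (I j) ∧ Indec (I j)) ∧
  (∀ M : ModuleCat.{u} A, Module.Finite A M → Module.Injective A M → Indec M →
      ∃ j, Nonempty (M ≃ₗ[A] I j)) ∧
  (∀ j k, Nonempty (I j ≃ₗ[A] I k) → j = k)

section ExtComparison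

variable {A : Type u} [Ring A]

/-- Vanishing of `Ext` computed by derived functors agrees with vanishing of `Abelian.Ext`. -/
theorem subsingleton_ext_succ_iff (M N : ModuleCat.{u} A) (n : ℕ) :
    Subsingleton (ext M N (n + 1)) ↔ Subsingleton (Abelian.Ext.{u} M N (n + 1)) := by
  let P := projectiveResolution M
  have h1 : Subsingleton (ext M N (n + 1)) ↔
      ∀ f : P.complex.X (n + 1) ⟶ N, P.complex.d (n + 2) (n + 1) ≫ f = 0 →
        ∃ g : P.complex.X n ⟶ N, P.complex.d (n + 1) n ≫ g = f := by
    rw [← ModuleCat.isZero_iff_subsingleton, (P.isoExt (n + 1) N).isZero_iff,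
      ← HomologicalComplex.exactAt_iff_isZero_homology,
      HomologicalComplex.exactAt_iff' _ n (n + 1) (n + 2) (by simp) (by simp),
      ShortComplex.moduleCat_exact_iff]
    rfl
  rw [h1]
  constructor
  · intro h
    refine subsingleton_of_forall_eq 0 fun α => ?_
    obtain ⟨f, hf, rfl⟩ := P.extMk_surjective α (n + 2) rfl
    exact (P.extMk_eq_zero_iff f (n + 2) rfl hf n rfl).2 (h f hf)
  · intro h f hf
    exact (P.extMk_eq_zero_iff f (n + 2) rfl hf n rfl).1 (Subsingleton.elim _ _)

end ExtComparison

section InjectiveEnvelopes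

/-- Every module embeds as an essential submodule into an injective module. -/
theorem exists_essential_injective (R : Type u) [Ring R] (M : Type u) [AddCommGroup M]
    [Module R M] :
    ∃ (D : Type u) (_ : AddCommGroup D) (_ : Module R D) (i : M →ₗ[R] D),
      Function.Injective i ∧ Module.Injective R D ∧
        ∀ N : Submodule R D, Disjoint N (LinearMap.range i) → N = ⊥ := by
  let J : ModuleCat.{u} R := Injective.under (ModuleCat.of R M)
  let ι : M →ₗ[R] J := (Injective.ι (ModuleCat.of R M)).hom
  have hι : Function.Injective ι :=
    (ModuleCat.mono_iff_injective (Injective.ι (ModuleCat.of R M))).1 inferInstance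
  have hJ' : Injective (ModuleCat.of R J) :=
    inferInstanceAs (Injective (Injective.under (ModuleCat.of R M)))
  have hJ : Module.Injective R J := Module.injective_module_of_injective_object R J
  let S : Submodule R J := LinearMap.range ι
  obtain ⟨C, -, hC⟩ := zorn_le_nonempty₀ {C : Submodule R J | Disjoint C S}
    (fun c hc hchain y hy => ⟨sSup c, (DirectedOn.disjoint_sSup_left hchain.directedOn).2
      (fun a ha => hc ha), fun z hz => le_sSup hz⟩) ⊥ disjoint_bot_left
  obtain ⟨D, hSD, hD⟩ := zorn_le_nonempty₀ {D : Submodule R J | Disjoint D C}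
    (fun c hc hchain y hy => ⟨sSup c, (DirectedOn.disjoint_sSup_left hchain.directedOn).2
      (fun a ha => hc ha), fun z hz => le_sSup hz⟩) S hC.prop.symm
  have hDC : Disjoint D C := hD.prop
  have hinj : Function.Injective (C.subtype.coprod D.subtype) := by
    rw [← LinearMap.ker_eq_bot, LinearMap.ker_coprod_of_disjoint_range]
    · simp
    · simpa using hDC.symm
  obtain ⟨ψ, hψ⟩ := hJ.out (C.subtype.coprod D.subtype) hinj
    (C.subtype ∘ₗ LinearMap.fst R C D)
  have hψC : ∀ c ∈ C, ψ c = c := fun c hc => by simpa using hψ (⟨c, hc⟩, 0)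
  have hψD : ∀ d ∈ D, ψ d = 0 := fun d hd => by simpa using hψ (0, ⟨d, hd⟩)
  have hcomap : Submodule.comap ψ S ≤ D := by
    refine hD.le_of_ge (y := Submodule.comap ψ S) ?_ (fun d hd => ?_)
    · refine Submodule.disjoint_def.2 fun c hc hcC => ?_
      rw [Submodule.mem_comap, hψC c hcC] at hc
      exact Submodule.disjoint_def.1 hC.prop c hcC hc
    · rw [Submodule.mem_comap, hψD d hd]
      exact S.zero_mem
  have hker : ∀ x, ψ x = 0 → x ∈ D := fun x hx => hcomap (by
    rw [Submodule.mem_comap, hx]; exact S.zero_mem)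
  have hrange : LinearMap.range ψ ≤ C := by
    refine hC.le_of_ge (y := LinearMap.range ψ) ?_ (fun c hc => ⟨c, hψC c hc⟩)
    refine Submodule.disjoint_def.2 ?_
    rintro _ ⟨x, rfl⟩ hx
    exact hψD x (hcomap hx)
  have hπ : ∀ x, x - ψ x ∈ D := fun x => hker _ (by
    rw [map_sub, hψC _ (hrange ⟨x, rfl⟩), sub_self])
  let π : J →ₗ[R] D := (LinearMap.id - ψ).codRestrict D hπ
  have hπD : ∀ d : D, π d = d := fun d => Subtype.ext (by
    simp [π, hψD d d.2])
  refine ⟨D, inferInstance, inferInstance, ι.codRestrict D (fun x => hSD ⟨x, rfl⟩),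
    fun x y hxy => hι (congrArg Subtype.val hxy), ⟨fun X Y _ _ _ _ f hf g => ?_⟩,
    fun N hN => ?_⟩
  · obtain ⟨h, hh⟩ := hJ.out f hf (D.subtype ∘ₗ g)
    exact ⟨π ∘ₗ h, fun x => by simp [hh, hπD]⟩
  · have hNC : C ⊔ N.map D.subtype ≤ C := by
      refine hC.le_of_ge (y := C ⊔ N.map D.subtype) ?_ le_sup_left
      refine Submodule.disjoint_def.2 fun s hs hsS => ?_
      obtain ⟨c, hc, _, ⟨n, hn, rfl⟩, rfl⟩ := Submodule.mem_sup.1 hs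
      have hcD : c ∈ D := by
        have := D.sub_mem (hSD hsS) n.2
        simpa using this
      have hc0 : c = 0 := Submodule.disjoint_def.1 hDC c hcD hc
      subst hc0
      have hn0 : n = 0 := by
        refine Submodule.disjoint_def.1 hN n hn ?_
        obtain ⟨m, hm⟩ := hsS
        exact ⟨m, Subtype.ext (by simpa using hm)⟩
      simp [hn0]
    refine (Submodule.eq_bot_iff _).2 fun n hn => Subtype.ext ?_
    exact Submodule.disjoint_def.1 hDC n n.2 (hNC (Submodule.mem_sup_right ⟨n, hn, rfl⟩))

/-- A finitely generated module over a commutative artinian ring embeds into a finitely generated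
injective module. -/
theorem exists_finite_injective (R : Type u) [CommRing R] [IsArtinianRing R] (M : Type u)
    [AddCommGroup M] [Module R M] [Module.Finite R M] :
    ∃ (D : Type u) (_ : AddCommGroup D) (_ : Module R D) (i : M →ₗ[R] D),
      Function.Injective i ∧ Module.Injective R D ∧ Module.Finite R D := by
  obtain ⟨D, _, _, i, hi, hD, hess⟩ := exists_essential_injective R M
  refine ⟨D, _, _, i, hi, hD, ?_⟩
  have key : ∀ (N : Type u) [AddCommGroup N] [Module R N] (_ : Module.Finite R N),
      IsNoetherian R (N →ₗ[R] D) := by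
    intro N _ _ hN
    induction hN using IsNoetherianRing.induction_on_isQuotientEquivQuotientPrime R with
    | subsingleton N =>
      have : Subsingleton (N →ₗ[R] D) := ⟨fun f g => LinearMap.ext fun x => by
        rw [Subsingleton.elim x 0, map_zero, map_zero]⟩
      infer_instance
    | quotient N p e =>
      have : p.asIdeal.IsMaximal := inferInstance
      have : IsSimpleModule R (R ⧸ p.asIdeal) :=
        isSimpleModule_iff_isCoatom.2 (Ideal.isMaximal_def.1 this)
      have : IsSimpleModule R N := IsSimpleModule.congr e
      have hle : ∀ f : N →ₗ[R] D, LinearMap.range f ≤ LinearMap.range i := by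
        intro f
        rcases eq_bot_or_eq_top ((LinearMap.range i).comap f) with h | h
        · have : LinearMap.range f = ⊥ := by
            refine hess _ (Submodule.disjoint_def.2 ?_)
            rintro _ ⟨x, rfl⟩ hx
            have : x ∈ (LinearMap.range i).comap f := hx
            rw [h, Submodule.mem_bot] at this
            rw [this, map_zero]
          rw [this]
          exact bot_le
        · rintro _ ⟨x, rfl⟩
          have : x ∈ (LinearMap.range i).comap f := by rw [h]; trivial
          exact this
      refine isNoetherian_of_surjective
        (i.compRight R : (N →ₗ[R] M) →ₗ[R] (N →ₗ[R] D)) (LinearMap.range_eq_top.2 fun f => ?_)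
      refine ⟨(LinearEquiv.ofInjective i hi).symm.toLinearMap ∘ₗ
        f.codRestrict _ (fun x => hle f ⟨x, rfl⟩), LinearMap.ext fun x => ?_⟩
      simp
    | exact N₁ N₂ N₃ f g hf hg hfg h₁ h₃ =>
      refine isNoetherian_of_range_eq_ker (g.lcomp R D) (f.lcomp R D) ?_
      ext φ
      constructor
      · rintro ⟨χ, rfl⟩
        exact LinearMap.ext fun x => by simp [hfg.apply_apply_eq_zero]
      · intro hφ
        refine ⟨(LinearMap.ker g).liftQ φ (fun x hx => ?_) ∘ₗ
          (g.quotKerEquivOfSurjective hg).symm.toLinearMap, LinearMap.ext fun x => ?_⟩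
        · obtain ⟨y, rfl⟩ := (hfg x).1 hx
          exact LinearMap.congr_fun hφ y
        · have : (g.quotKerEquivOfSurjective hg).symm (g x) = Submodule.Quotient.mk x := by
            rw [LinearEquiv.symm_apply_eq]; rfl
          simp [this]
  have := key R inferInstance
  have : IsNoetherian R D := isNoetherian_of_linearEquiv (LinearMap.ringLmapEquivSelf R R D)
  infer_instance

/-- Over an artin algebra, a finitely generated module embeds into a finitely generated
injective module. -/
theorem exists_finite_injective_of_artinAlgebra (R : Type u) [CommRing R] [IsArtinianRing R]
    {A : Type u} [Ring A] [Algebra R A] [Module.Finite R A] (M : ModuleCat.{u} A)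
    [Module.Finite A M] :
    ∃ (I : ModuleCat.{u} A) (f : M ⟶ I), Mono f ∧ Injective I ∧ Module.Finite A I := by
  let _ : Module R M := Module.compHom M (algebraMap R A)
  have : IsScalarTower R A M := ⟨fun r a m => by
    rw [Algebra.smul_def, mul_smul]; rfl⟩
  have : Module.Finite R M := Module.Finite.trans A M
  obtain ⟨D, _, _, i, hi, hD, hfin⟩ := exists_finite_injective R M
  let F : ModuleCat.{u} A := (ModuleCat.coextendScalars (algebraMap R A)).obj (ModuleCat.of R D)
  have : Injective (ModuleCat.of R D) := Module.injective_object_of_injective_module R D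
  have hF : Injective F :=
    Injective.injective_of_adjoint (ModuleCat.restrictCoextendScalarsAdj (algebraMap R A)) _
  let i' : (ModuleCat.restrictScalars (algebraMap R A)).obj M ⟶ ModuleCat.of R D :=
    ModuleCat.ofHom (X := (ModuleCat.restrictScalars (algebraMap R A)).obj M) i
  refine ⟨F, (ModuleCat.restrictCoextendScalarsAdj (algebraMap R A)).homEquiv _ _ i', ?_, hF, ?_⟩
  · rw [ModuleCat.mono_iff_injective]
    intro x y hxy
    have h := congrArg (fun g =>
      ModuleCat.CoextendScalars.equiv (algebraMap R A) (ModuleCat.of R D) g (1 : A)) hxy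
    have h' : i ((1 : A) • x) = i ((1 : A) • y) := h
    simpa using hi h'
  · classical
    obtain ⟨s, hs⟩ := (Module.finite_def (R := R) (M := A →ₗ[R] D)).1 inferInstance
    let e := ModuleCat.CoextendScalars.equiv (algebraMap R A) (ModuleCat.of R D)
    let j : (A →ₗ[R] D) → F := fun g => e.symm
      { toFun := g
        map_add' := g.map_add
        map_smul' := fun r (a : A) => by
          change g (algebraMap R A r * a) = r • g a
          rw [← Algebra.smul_def, map_smul] }
    have hj : Function.Surjective j := fun φ =>
      ⟨{ toFun := e φ
         map_add' := (e φ).map_add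
         map_smul' := fun r a => by
           rw [Algebra.smul_def]
           exact (e φ).map_smul r a }, rfl⟩
    have hadd : ∀ g h, j (g + h) = j g + j h := fun _ _ => rfl
    have hsmul : ∀ (r : R) g, j (r • g) = algebraMap R A r • j g := fun r g =>
      e.injective (LinearMap.ext fun (a : A) => by
        change r • g a = g (a * algebraMap R A r)
        rw [← Algebra.commutes, ← Algebra.smul_def, map_smul])
    refine (Module.finite_def (R := A) (M := F)).2 ⟨s.image j, eq_top_iff.2 fun φ _ => ?_⟩
    obtain ⟨g, rfl⟩ := hj φ
    have hg : g ∈ Submodule.span R (s : Set (A →ₗ[R] D)) := by rw [hs]; trivial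
    induction hg using Submodule.span_induction with
    | mem x hx => exact Submodule.subset_span (Finset.mem_coe.2 (Finset.mem_image_of_mem j hx))
    | zero => exact Submodule.zero_mem _
    | add x y _ _ hx hy => rw [hadd]; exact Submodule.add_mem _ (hx trivial) (hy trivial)
    | smul r x _ hx => rw [hsmul]; exact Submodule.smul_mem _ _ (hx trivial)

end InjectiveEnvelopes

section LongExactSequences

variable {A : Type u} [Ring A] {S : ShortComplex (ModuleCat.{u} A)}

theorem CategoryTheory.ShortComplex.ShortExact.subsingleton_ext_X₃_right (hS : S.ShortExact)
    (X : ModuleCat.{u} A) (n : ℕ) (h₂ : Subsingleton (Abelian.Ext.{u} X S.X₂ n))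
    (h₁ : Subsingleton (Abelian.Ext.{u} X S.X₁ (n + 1))) :
    Subsingleton (Abelian.Ext.{u} X S.X₃ n) := by
  refine subsingleton_of_forall_eq 0 fun x => ?_
  obtain ⟨y, rfl⟩ := Abelian.Ext.covariant_sequence_exact₃ X hS x rfl (Subsingleton.elim _ _)
  rw [Subsingleton.elim y 0, Abelian.Ext.zero_comp]

theorem CategoryTheory.ShortComplex.ShortExact.subsingleton_ext_X₂_right (hS : S.ShortExact)
    (X : ModuleCat.{u} A) (n : ℕ) (h₁ : Subsingleton (Abelian.Ext.{u} X S.X₁ n))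
    (h₃ : Subsingleton (Abelian.Ext.{u} X S.X₃ n)) :
    Subsingleton (Abelian.Ext.{u} X S.X₂ n) := by
  refine subsingleton_of_forall_eq 0 fun x => ?_
  obtain ⟨y, rfl⟩ := Abelian.Ext.covariant_sequence_exact₂ X hS x (Subsingleton.elim _ _)
  rw [Subsingleton.elim y 0, Abelian.Ext.zero_comp]

theorem CategoryTheory.ShortComplex.ShortExact.subsingleton_ext_X₁_right (hS : S.ShortExact)
    (X : ModuleCat.{u} A) (n : ℕ) (h₃ : Subsingleton (Abelian.Ext.{u} X S.X₃ n))
    (h₂ : Subsingleton (Abelian.Ext.{u} X S.X₂ (n + 1))) :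
    Subsingleton (Abelian.Ext.{u} X S.X₁ (n + 1)) := by
  refine subsingleton_of_forall_eq 0 fun x => ?_
  obtain ⟨y, rfl⟩ := Abelian.Ext.covariant_sequence_exact₁ X hS x (Subsingleton.elim _ _) rfl
  rw [Subsingleton.elim y 0, Abelian.Ext.zero_comp]

theorem CategoryTheory.ShortComplex.ShortExact.subsingleton_ext_X₁_left (hS : S.ShortExact)
    (Y : ModuleCat.{u} A) (n : ℕ) (h₂ : Subsingleton (Abelian.Ext.{u} S.X₂ Y n))
    (h₃ : Subsingleton (Abelian.Ext.{u} S.X₃ Y (n + 1))) :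
    Subsingleton (Abelian.Ext.{u} S.X₁ Y n) := by
  refine subsingleton_of_forall_eq 0 fun x => ?_
  obtain ⟨y, rfl⟩ := Abelian.Ext.contravariant_sequence_exact₁ hS Y x (add_comm 1 n)
    (Subsingleton.elim _ _)
  rw [Subsingleton.elim y 0, Abelian.Ext.comp_zero]

theorem CategoryTheory.ShortComplex.ShortExact.subsingleton_ext_X₂_left (hS : S.ShortExact)
    (Y : ModuleCat.{u} A) (n : ℕ) (h₁ : Subsingleton (Abelian.Ext.{u} S.X₁ Y n))
    (h₃ : Subsingleton (Abelian.Ext.{u} S.X₃ Y n)) :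
    Subsingleton (Abelian.Ext.{u} S.X₂ Y n) := by
  refine subsingleton_of_forall_eq 0 fun x => ?_
  obtain ⟨y, rfl⟩ := Abelian.Ext.contravariant_sequence_exact₂ hS Y x (Subsingleton.elim _ _)
  rw [Subsingleton.elim y 0, Abelian.Ext.comp_zero]

/-- If `Ext^1(X, S.X₁) = 0`, then morphisms `X ⟶ S.X₃` lift to `S.X₂`. -/
theorem CategoryTheory.ShortComplex.ShortExact.exists_lift (hS : S.ShortExact) {X : ModuleCat.{u} A}
    (h : Subsingleton (Abelian.Ext.{u} X S.X₁ 1)) (g : X ⟶ S.X₃) :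
    ∃ l : X ⟶ S.X₂, l ≫ S.g = g := by
  obtain ⟨y, hy⟩ := Abelian.Ext.covariant_sequence_exact₃ X hS (Abelian.Ext.mk₀ g)
    (zero_add 1) (Subsingleton.elim _ _)
  obtain ⟨l, rfl⟩ := Abelian.Ext.homEquiv₀.symm.surjective y
  refine ⟨l, Abelian.Ext.homEquiv₀.symm.injective ?_⟩
  simpa using hy

/-- If `Ext^1(S.X₃, Y) = 0`, then morphisms `S.X₁ ⟶ Y` extend to `S.X₂`. -/
theorem CategoryTheory.ShortComplex.ShortExact.exists_extension (hS : S.ShortExact)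
    {Y : ModuleCat.{u} A}
    (h : Subsingleton (Abelian.Ext.{u} S.X₃ Y 1)) (g : S.X₁ ⟶ Y) :
    ∃ l : S.X₂ ⟶ Y, S.f ≫ l = g := by
  obtain ⟨y, hy⟩ := Abelian.Ext.contravariant_sequence_exact₁ hS Y (Abelian.Ext.mk₀ g)
    (add_zero 1) (Subsingleton.elim _ _)
  obtain ⟨l, rfl⟩ := Abelian.Ext.homEquiv₀.symm.surjective y
  refine ⟨l, Abelian.Ext.homEquiv₀.symm.injective ?_⟩
  simpa using hy

/-- If every morphism `X ⟶ S.X₃` lifts to `S.X₂` and `Ext^1(X, S.X₂) = 0`,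
then `Ext^1(X, S.X₁) = 0`. -/
theorem CategoryTheory.ShortComplex.ShortExact.subsingleton_ext_one_of_lift (hS : S.ShortExact)
    (X : ModuleCat.{u} A) (h₂ : Subsingleton (Abelian.Ext.{u} X S.X₂ 1))
    (h : ∀ g : X ⟶ S.X₃, ∃ l : X ⟶ S.X₂, l ≫ S.g = g) :
    Subsingleton (Abelian.Ext.{u} X S.X₁ 1) := by
  refine subsingleton_of_forall_eq 0 fun x => ?_
  obtain ⟨y, rfl⟩ := Abelian.Ext.covariant_sequence_exact₁ X hS x (Subsingleton.elim _ _)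
    (zero_add 1)
  obtain ⟨g, rfl⟩ := Abelian.Ext.homEquiv₀.symm.surjective y
  obtain ⟨l, rfl⟩ := h g
  simp [← Abelian.Ext.mk₀_comp_mk₀]

end LongExactSequences

section Closure

variable {A : Type u} [Ring A]

/-- The short complex of modules attached to an injection and a surjection with the same
image and kernel. -/
theorem ShortExact.shortExact {M₁ M₂ M₃ : ModuleCat.{u} A} {f : M₁ →ₗ[A] M₂} {g : M₂ →ₗ[A] M₃}
    (h : ShortExact f g) :
    (ModuleCat.shortComplexOfCompEqZero f g h.2.1.linearMap_comp_eq_zero).ShortExact :=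
  ModuleCat.shortComplex_shortExact _ h.2.1 h.1 h.2.2

/-- A property closed under extensions and retracts and holding for zero modules passes from a
family to the modules in its additive closure. -/
theorem InAddOf.of_closed {Q X : ModuleCat.{u} A → Prop}
    (zero : ∀ M : ModuleCat.{u} A, Subsingleton M → Q M)
    (extension : ∀ (M₁ M₂ M₃ : ModuleCat.{u} A) (f : M₁ →ₗ[A] M₂) (g : M₂ →ₗ[A] M₃),
      ShortExact f g → Q M₁ → Q M₃ → Q M₂)
    (retract : ∀ M N : ModuleCat.{u} A, IsSummand M N → Q N → Q M)
    (hX : ∀ M, X M → Q M) {M : ModuleCat.{u} A} (hM : InAddOf X M) : Q M := by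
  obtain ⟨k, F, hF, hMF⟩ := hM
  have key : ∀ (k : ℕ) (F : Fin k → ModuleCat.{u} A), (∀ i, Q (F i)) →
      Q (ModuleCat.of A (∀ i, F i)) := by
    intro k
    induction k with
    | zero => exact fun F _ => zero _ (inferInstanceAs (Subsingleton (∀ i : Fin 0, F i)))
    | succ k ih =>
      intro F hF
      refine extension (ModuleCat.of A (∀ i : Fin k, F i.succ)) _ (F 0)
        ((Fin.consLinearEquiv A (fun i => F i)).toLinearMap ∘ₗ LinearMap.inr A _ _)
        (LinearMap.proj 0) ⟨?_, ?_, ?_⟩ (ih _ fun i => hF _) (hF 0)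
      · exact (Fin.consLinearEquiv A (fun i => F i)).injective.comp LinearMap.inr_injective
      · intro x
        constructor
        · intro hx
          refine ⟨fun i => x i.succ, ?_⟩
          funext i
          refine Fin.cases ?_ (fun i => ?_) i
          · exact hx.symm
          · rfl
        · rintro ⟨y, rfl⟩
          rfl
      · exact fun x => ⟨Pi.single 0 x, by simp⟩
  obtain ⟨s, r, hrs⟩ := hMF
  let e := DirectSum.linearEquivFunOnFintype A (Fin k) (fun i => F i)
  exact retract M _ ⟨e.toLinearMap ∘ₗ s, r ∘ₗ e.symm.toLinearMap, LinearMap.ext fun x => by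
    simpa [e] using LinearMap.congr_fun hrs x⟩ (key k F fun i => hX _ (hF i))

theorem IsSummand.nonempty_retract {M N : ModuleCat.{u} A} (h : IsSummand M N) :
    Nonempty (Retract M N) := by
  obtain ⟨s, r, hrs⟩ := h
  exact ⟨⟨ModuleCat.ofHom s, ModuleCat.ofHom r, ModuleCat.hom_ext hrs⟩⟩

theorem IsSummand.subsingleton_ext_left {M N : ModuleCat.{u} A} (h : IsSummand M N)
    (Y : ModuleCat.{u} A) (n : ℕ) (hN : Subsingleton (Abelian.Ext.{u} N Y n)) :
    Subsingleton (Abelian.Ext.{u} M Y n) := by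
  obtain ⟨e⟩ := h.nonempty_retract
  refine subsingleton_of_forall_eq 0 fun x => ?_
  have : (Abelian.Ext.mk₀ e.i).comp ((Abelian.Ext.mk₀ e.r).comp x (zero_add n)) (zero_add n) =
      x := by simp
  rw [← this, Subsingleton.elim ((Abelian.Ext.mk₀ e.r).comp x (zero_add n)) 0,
    Abelian.Ext.comp_zero]

theorem IsSummand.subsingleton_ext_right {M N : ModuleCat.{u} A} (h : IsSummand M N)
    (X : ModuleCat.{u} A) (n : ℕ) (hN : Subsingleton (Abelian.Ext.{u} X N n)) :
    Subsingleton (Abelian.Ext.{u} X M n) := by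
  obtain ⟨e⟩ := h.nonempty_retract
  refine subsingleton_of_forall_eq 0 fun x => ?_
  have : (x.comp (Abelian.Ext.mk₀ e.i) (add_zero n)).comp (Abelian.Ext.mk₀ e.r) (add_zero n) =
      x := by simp
  rw [← this, Subsingleton.elim (x.comp (Abelian.Ext.mk₀ e.i) (add_zero n)) 0,
    Abelian.Ext.zero_comp]

end Closure

section FiniteProjectiveDimension

variable {A : Type u} [Ring A]

theorem extVanish_iff (M N : ModuleCat.{u} A) :
    ExtVanish M N ↔ ∀ i, Subsingleton (Abelian.Ext.{u} M N (i + 1)) :=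
  ⟨fun h i => (subsingleton_ext_succ_iff M N i).1 (h (i + 1) i.succ_pos), fun h i hi => by
    obtain ⟨i, rfl⟩ := Nat.exists_eq_succ_of_ne_zero hi.ne'
    exact (subsingleton_ext_succ_iff M N i).2 (h i)⟩

theorem pdLE_iff (M : ModuleCat.{u} A) (n : ℕ) :
    pdLE M n ↔ HasProjectiveDimensionLT M (n + 1) := by
  constructor
  · intro h
    refine HasProjectiveDimensionLT.mk fun i hi Y e => ?_
    obtain ⟨i, rfl⟩ := Nat.exists_eq_succ_of_ne_zero (Nat.ne_zero_of_lt hi)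
    have := (subsingleton_ext_succ_iff M Y i).1 (h (i + 1) hi Y)
    exact Subsingleton.elim _ _
  · intro h i hi Y
    obtain ⟨i, rfl⟩ := Nat.exists_eq_succ_of_ne_zero (Nat.ne_zero_of_lt hi)
    exact (subsingleton_ext_succ_iff M Y i).2
      (HasProjectiveDimensionLT.subsingleton M (n + 1) (i + 1) hi Y)

theorem inP_iff (M : ModuleCat.{u} A) :
    InP M ↔ Module.Finite A M ∧ ∃ n, HasProjectiveDimensionLT M n := by
  refine and_congr_right fun _ => ⟨?_, ?_⟩
  · rintro ⟨n, hn⟩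
    exact ⟨n + 1, (pdLE_iff M n).1 hn⟩
  · rintro ⟨n, hn⟩
    exact ⟨n, (pdLE_iff M n).2 (hasProjectiveDimensionLT_of_ge M n (n + 1) (by lia))⟩

theorem InP.of_extension {M₁ M₂ M₃ : ModuleCat.{u} A} {f : M₁ →ₗ[A] M₂} {g : M₂ →ₗ[A] M₃}
    (h : ShortExact f g) (h₁ : InP M₁) (h₃ : InP M₃) : InP M₂ := by
  rw [inP_iff] at h₁ h₃ ⊢
  obtain ⟨_, n, hn⟩ := h₁
  obtain ⟨_, m, hm⟩ := h₃
  refine ⟨Module.Finite.of_exact h.2.1 h.2.2, n + m,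
    h.shortExact.hasProjectiveDimensionLT_X₂ (n + m) ?_ ?_⟩
  · exact hasProjectiveDimensionLT_of_ge M₁ n (n + m) (by lia)
  · exact hasProjectiveDimensionLT_of_ge M₃ m (n + m) (by lia)

theorem InP.of_kernel [IsNoetherianRing A] {M₁ M₂ M₃ : ModuleCat.{u} A} {f : M₁ →ₗ[A] M₂}
    {g : M₂ →ₗ[A] M₃} (h : ShortExact f g) (h₂ : InP M₂) (h₃ : InP M₃) : InP M₁ := by
  rw [inP_iff] at h₂ h₃ ⊢
  obtain ⟨_, n, hn⟩ := h₂
  obtain ⟨_, m, hm⟩ := h₃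
  refine ⟨Module.Finite.of_injective f h.1, n + m,
    h.shortExact.hasProjectiveDimensionLT_X₁ (n + m) ?_ ?_⟩
  · exact hasProjectiveDimensionLT_of_ge M₂ n (n + m) (by lia)
  · exact hasProjectiveDimensionLT_of_ge M₃ m (n + m + 1) (by lia)

theorem InP.of_isSummand {M N : ModuleCat.{u} A} (h : IsSummand M N) (hN : InP N) : InP M := by
  rw [inP_iff] at hN ⊢
  obtain ⟨_, n, hn⟩ := hN
  obtain ⟨e⟩ := h.nonempty_retract
  refine ⟨?_, n, e.hasProjectiveDimensionLT n⟩
  obtain ⟨s, r, hrs⟩ := h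
  exact Module.Finite.of_surjective r fun x => ⟨s x, LinearMap.congr_fun hrs x⟩

theorem InP.of_subsingleton {M : ModuleCat.{u} A} (h : Subsingleton M) : InP M :=
  (inP_iff M).2 ⟨inferInstance, 0,
    (ModuleCat.isZero_iff_subsingleton.2 h).hasProjectiveDimensionLT_zero⟩

theorem InAddOf.inP {T M : ModuleCat.{u} A} (hM : InAddOf (fun X => X = T) M) (hT : InP T) :
    InP M :=
  hM.of_closed (fun _ => InP.of_subsingleton) (fun _ _ _ _ _ => InP.of_extension)
    (fun _ _ => InP.of_isSummand) (by rintro _ rfl; exact hT)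

theorem subsingleton_ext_of_subsingleton_left {M : ModuleCat.{u} A} (h : Subsingleton M)
    (Y : ModuleCat.{u} A) (n : ℕ) : Subsingleton (Abelian.Ext.{u} M Y n) :=
  have := (ModuleCat.isZero_iff_subsingleton.2 h).hasProjectiveDimensionLT_zero
  HasProjectiveDimensionLT.subsingleton M 0 n n.zero_le Y

theorem subsingleton_ext_of_subsingleton_right {M : ModuleCat.{u} A} (h : Subsingleton M)
    (X : ModuleCat.{u} A) (n : ℕ) : Subsingleton (Abelian.Ext.{u} X M n) := by
  refine subsingleton_of_forall_eq 0 fun x => ?_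
  rw [← Abelian.Ext.comp_mk₀_id x,
    (ModuleCat.isZero_iff_subsingleton.2 h).eq_of_src (𝟙 M) 0, Abelian.Ext.mk₀_zero,
    Abelian.Ext.comp_zero]

theorem InAddOf.extVanish_left {T M Y : ModuleCat.{u} A} (hM : InAddOf (fun X => X = T) M)
    (hT : ExtVanish T Y) : ExtVanish M Y := by
  rw [extVanish_iff] at hT ⊢
  exact fun i => hM.of_closed
    (Q := fun X : ModuleCat.{u} A => Subsingleton (Abelian.Ext.{u} X Y (i + 1)))
    (fun _ h => subsingleton_ext_of_subsingleton_left h _ _)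
    (fun _ _ _ _ _ h => h.shortExact.subsingleton_ext_X₂_left Y _)
    (fun _ _ h => h.subsingleton_ext_left Y _) (by rintro _ rfl; exact hT i)

theorem InAddOf.extVanish_right {T M X : ModuleCat.{u} A} (hM : InAddOf (fun X => X = T) M)
    (hT : ExtVanish X T) : ExtVanish X M := by
  rw [extVanish_iff] at hT ⊢
  exact fun i => hM.of_closed
    (Q := fun Y : ModuleCat.{u} A => Subsingleton (Abelian.Ext.{u} X Y (i + 1)))
    (fun _ h => subsingleton_ext_of_subsingleton_right h _ _)
    (fun _ _ _ _ _ h => h.shortExact.subsingleton_ext_X₂_right X _)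
    (fun _ _ h => h.subsingleton_ext_right X _) (by rintro _ rfl; exact hT i)

theorem inAddOf_pi (T : ModuleCat.{u} A) (k : ℕ) :
    InAddOf (fun X => X = T) (ModuleCat.of A (Fin k → T)) := by
  let e := DirectSum.linearEquivFunOnFintype A (Fin k) (fun _ => T)
  exact ⟨k, fun _ => T, fun _ => rfl, e.symm.toLinearMap, e.toLinearMap,
    LinearMap.ext fun x => e.apply_symm_apply x⟩

theorem shortExact_ker {M N : ModuleCat.{u} A} (g : M →ₗ[A] N) (hg : Function.Surjective g) :
    ShortExact (M₁ := ModuleCat.of A (LinearMap.ker g)) (LinearMap.ker g).subtype g :=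
  ⟨(LinearMap.ker g).subtype_injective, LinearMap.exact_subtype_ker_map g, hg⟩

/-- Dimension shifting along injectives: if `Ext`-vanishing against `T` implies `Ext`-vanishing
against `M`, then the projective dimension of `M` is bounded by that of `T`. -/
theorem pdLE.of_extVanish {T M : ModuleCat.{u} A} {n : ℕ} (hT : pdLE T n)
    (h : ∀ N : ModuleCat.{u} A, ExtVanish T N → ExtVanish M N) : pdLE M n := by
  have key : ∀ (n : ℕ) (N : ModuleCat.{u} A),
      (∀ i, n ≤ i → Subsingleton (Abelian.Ext.{u} T N (i + 1))) →
        ∀ i, n ≤ i → Subsingleton (Abelian.Ext.{u} M N (i + 1)) := by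
    intro n
    induction n with
    | zero =>
      intro N hN i _
      exact (extVanish_iff M N).1 (h N ((extVanish_iff T N).2 fun j => hN j j.zero_le)) i
    | succ n ih =>
      intro N hN i hi
      obtain ⟨i, rfl⟩ := Nat.exists_eq_succ_of_ne_zero (Nat.ne_zero_of_lt hi)
      let S := ShortComplex.mk (Injective.ι N) (Limits.cokernel.π (Injective.ι N))
        (Limits.cokernel.condition _)
      have hS : S.ShortExact :=
        { exact := ShortComplex.exact_cokernel (Injective.ι N)
          mono_f := inferInstanceAs (Mono (Injective.ι N))
          epi_g := inferInstanceAs (Epi (Limits.cokernel.π (Injective.ι N))) }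
      have hI : Injective S.X₂ := inferInstanceAs (Injective (Injective.under N))
      refine hS.subsingleton_ext_X₁_right M (i + 1) (ih S.X₃ (fun j hj => ?_) i (by lia))
        (Abelian.Ext.subsingleton_of_injective _ _ _)
      exact hS.subsingleton_ext_X₃_right T (j + 1) (Abelian.Ext.subsingleton_of_injective _ _ _)
        (hN (j + 1) (by lia))
  intro i hi N
  obtain ⟨i, rfl⟩ := Nat.exists_eq_succ_of_ne_zero (Nat.ne_zero_of_lt hi)
  exact (subsingleton_ext_succ_iff M N i).2 (key n N (fun j hj =>
    (subsingleton_ext_succ_iff T N j).1 (hT (j + 1) (by lia) N)) i (by lia))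

end FiniteProjectiveDimension

section Tilting

variable {A : Type u} [Ring A]

/-- Maps out of a module with a finite coresolution by `add T` into a module of `T^⊥`
factor through the first term of the coresolution. -/
theorem HasAddCoresolution.exists_factorization {T L Y : ModuleCat.{u} A}
    (hL : HasAddCoresolution T L) (hY : ExtVanish T Y) (g : L →ₗ[A] Y) :
    ∃ (C : ModuleCat.{u} A) (f : L →ₗ[A] C) (h : C →ₗ[A] Y),
      InAddOf (fun X => X = T) C ∧ h ∘ₗ f = g := by
  obtain ⟨C, d, f, hf, hfd, hdd, hC, m, hm⟩ := hL
  have hse : ∀ j, ShortExact (M₁ := ModuleCat.of A (LinearMap.ker (d j)))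
      (M₃ := ModuleCat.of A (LinearMap.ker (d (j + 1)))) (LinearMap.ker (d j)).subtype
      ((d j).codRestrict (LinearMap.ker (d (j + 1))) fun x => (hdd j _).2 ⟨x, rfl⟩) := by
    intro j
    refine ⟨Submodule.subtype_injective _, fun x => ?_, ?_⟩
    · exact Subtype.ext_iff.trans ⟨fun hx => ⟨⟨x, hx⟩, rfl⟩, by rintro ⟨y, rfl⟩; exact y.2⟩
    · rintro ⟨x, hx⟩
      obtain ⟨y, rfl⟩ := (hdd j x).1 hx
      exact ⟨y, rfl⟩
  have hvan : ∀ k j, m ≤ j + k → ∀ i,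
      Subsingleton (Abelian.Ext.{u} (ModuleCat.of A (LinearMap.ker (d j))) Y (i + 1)) := by
    intro k
    induction k with
    | zero =>
      intro j hj i
      have := hm j hj
      exact subsingleton_ext_of_subsingleton_left
        (inferInstanceAs (Subsingleton (LinearMap.ker (d j)))) _ _
    | succ k ih =>
      intro j hj i
      exact (hse j).shortExact.subsingleton_ext_X₁_left Y (i + 1)
        ((extVanish_iff _ _).1 ((hC j).extVanish_left hY) i) (ih (j + 1) (by lia) (i + 1))
  have hse₀ : ShortExact (M₃ := ModuleCat.of A (LinearMap.ker (d 1))) f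
      ((d 0).codRestrict (LinearMap.ker (d 1)) fun x => (hdd 0 _).2 ⟨x, rfl⟩) := by
    refine ⟨hf, fun x => ?_, (hse 0).2.2⟩
    exact Subtype.ext_iff.trans (hfd x)
  obtain ⟨l, hl⟩ := hse₀.shortExact.exists_extension (hvan m 1 (by lia) 0) (ModuleCat.ofHom g)
  exact ⟨C 0, f, l.hom, hC 0, congrArg ModuleCat.Hom.hom hl⟩

end Tilting

section Pullbacks

variable {A : Type u} [Ring A]

/-- The pullback of two short exact sequences with the same right end. -/
theorem ShortExact.exists_pullback {M₁ M₂ N₁ N₂ L : ModuleCat.{u} A} {f : M₁ →ₗ[A] M₂}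
    {g : M₂ →ₗ[A] L} {f' : N₁ →ₗ[A] N₂} {g' : N₂ →ₗ[A] L} (h : ShortExact f g)
    (h' : ShortExact f' g') :
    ∃ (P : ModuleCat.{u} A) (i : M₁ →ₗ[A] P) (p : P →ₗ[A] N₂) (i' : N₁ →ₗ[A] P)
      (p' : P →ₗ[A] M₂), ShortExact i p ∧ ShortExact i' p' := by
  let E : Submodule A (M₂ × N₂) :=
    LinearMap.eqLocus (g ∘ₗ LinearMap.fst A M₂ N₂) (g' ∘ₗ LinearMap.snd A M₂ N₂)
  have hE : ∀ x : M₂ × N₂, x ∈ E ↔ g x.1 = g' x.2 := fun _ => Iff.rfl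
  refine ⟨ModuleCat.of A E,
    (LinearMap.inl A M₂ N₂ ∘ₗ f).codRestrict E fun x => ?_,
    LinearMap.snd A M₂ N₂ ∘ₗ E.subtype,
    (LinearMap.inr A M₂ N₂ ∘ₗ f').codRestrict E fun x => ?_,
    LinearMap.fst A M₂ N₂ ∘ₗ E.subtype, ⟨?_, ?_, ?_⟩, ⟨?_, ?_, ?_⟩⟩
  · simp [hE, h.2.1.apply_apply_eq_zero]
  · simp [hE, h'.2.1.apply_apply_eq_zero]
  · exact fun x y hxy => h.1 (congrArg (fun z : E => z.1.1) hxy)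
  · rintro ⟨⟨x, y⟩, hxy⟩
    constructor
    · rintro (rfl : y = 0)
      obtain ⟨z, rfl⟩ := (h.2.1 x).1 (by simpa [hE] using hxy)
      exact ⟨z, rfl⟩
    · rintro ⟨z, hz⟩
      exact (congrArg (fun z : E => z.1.2) hz).symm
  · intro y
    obtain ⟨x, hx⟩ := h.2.2 (g' y)
    exact ⟨⟨(x, y), hx⟩, rfl⟩
  · exact fun x y hxy => h'.1 (congrArg (fun z : E => z.1.2) hxy)
  · rintro ⟨⟨x, y⟩, hxy⟩
    constructor
    · rintro (rfl : x = 0)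
      obtain ⟨z, rfl⟩ := (h'.2.1 y).1 (by simpa [hE] using hxy.symm)
      exact ⟨z, rfl⟩
    · rintro ⟨z, hz⟩
      exact (congrArg (fun z : E => z.1.1) hz).symm
  · intro x
    obtain ⟨y, hy⟩ := h'.2.2 (g x)
    exact ⟨⟨(x, y), hy.symm⟩, rfl⟩

/-- The kernel of a composite of two surjections is an extension of their kernels. -/
theorem ShortExact.exists_ker_comp {K G Z M X : ModuleCat.{u} A} {k : K →ₗ[A] G}
    {p : G →ₗ[A] Z} {f : M →ₗ[A] Z} {g : Z →ₗ[A] X} (h : ShortExact k p)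
    (h' : ShortExact f g) :
    ∃ (P : ModuleCat.{u} A) (i : P →ₗ[A] G) (i' : K →ₗ[A] P) (p' : P →ₗ[A] M),
      ShortExact i (g ∘ₗ p) ∧ ShortExact i' p' := by
  have hP : ∀ x : LinearMap.ker (g ∘ₗ p), p x ∈ LinearMap.range f := fun x => (h'.2.1 _).1 x.2
  have hq : ∀ x, f ((LinearEquiv.ofInjective f h'.1).symm ⟨p x.1, hP x⟩) = p x.1 := fun x =>
    congrArg Subtype.val ((LinearEquiv.ofInjective f h'.1).apply_symm_apply ⟨p x.1, hP x⟩)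
  refine ⟨ModuleCat.of A (LinearMap.ker (g ∘ₗ p)), _,
    k.codRestrict (LinearMap.ker (g ∘ₗ p)) fun x => ?_,
    (LinearEquiv.ofInjective f h'.1).symm.toLinearMap ∘ₗ
      (p ∘ₗ (LinearMap.ker (g ∘ₗ p)).subtype).codRestrict (LinearMap.range f) hP,
    shortExact_ker (g ∘ₗ p) (h'.2.2.comp h.2.2), ?_, fun x => ?_, fun m => ?_⟩
  · simp [h.2.1.apply_apply_eq_zero]
  · exact fun x y hxy => h.1 (congrArg Subtype.val hxy)
  · constructor
    · intro hx
      have hx' : p x.1 = 0 := by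
        rw [← hq x]
        exact (congrArg f hx).trans f.map_zero
      obtain ⟨y, hy⟩ := (h.2.1 x.1).1 hx'
      exact ⟨y, Subtype.ext hy⟩
    · rintro ⟨y, rfl⟩
      refine h'.1 ((hq _).trans ?_)
      rw [f.map_zero]
      exact h.2.1.apply_apply_eq_zero y
  · obtain ⟨x, hx⟩ := h.2.2 (f m)
    have hxP : x ∈ LinearMap.ker (g ∘ₗ p) := by
      rw [LinearMap.mem_ker, LinearMap.comp_apply, hx]
      exact h'.2.1.apply_apply_eq_zero m
    exact ⟨⟨x, hxP⟩, h'.1 ((hq ⟨x, hxP⟩).trans hx)⟩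

end Pullbacks

section Approximations

/-- Over an artin algebra, the maps from a finitely generated module `T` to a finitely generated
module `Y` all factor through a single map from a finite power of `T`. -/
theorem exists_pi_approximation (R : Type u) [CommRing R] [IsArtinianRing R]
    {A : Type u} [Ring A] [Algebra R A] [Module.Finite R A] (T Y : ModuleCat.{u} A)
    [Module.Finite A T] [Module.Finite A Y] :
    ∃ (k : ℕ) (g : (Fin k → T) →ₗ[A] Y),
      ∀ t : T →ₗ[A] Y, ∃ l : T →ₗ[A] (Fin k → T), g ∘ₗ l = t := by
  let _ : Module R T := Module.compHom T (algebraMap R A)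
  have : IsScalarTower R A T := ⟨fun r a m => by
    rw [Algebra.smul_def, mul_smul]; rfl⟩
  let _ : Module R Y := Module.compHom Y (algebraMap R A)
  have : IsScalarTower R A Y := ⟨fun r a m => by
    rw [Algebra.smul_def, mul_smul]; rfl⟩
  have : SMulCommClass A R T := IsScalarTower.to_smulCommClass'
  have : SMulCommClass A R Y := IsScalarTower.to_smulCommClass'
  have : Module.Finite R T := Module.Finite.trans A T
  have : Module.Finite R Y := Module.Finite.trans A Y
  have : Module.Finite R (T →ₗ[A] Y) :=
    Module.Finite.of_injective (LinearMap.restrictScalarsₗ R A T Y R)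
      (LinearMap.restrictScalars_injective R)
  obtain ⟨k, s, hs⟩ := Module.Finite.exists_fin (R := R) (M := T →ₗ[A] Y)
  refine ⟨k, LinearMap.lsum A (fun _ => T) ℕ s, fun t => ?_⟩
  obtain ⟨c, rfl⟩ := (Submodule.mem_span_range_iff_exists_fun R).1
    (show t ∈ Submodule.span R (Set.range s) by rw [hs]; trivial)
  refine ⟨LinearMap.pi fun j => c j • LinearMap.id, LinearMap.ext fun x => ?_⟩
  simp [LinearMap.lsum_apply, LinearMap.map_smul_of_tower]

/-- Over an artin algebra, a finitely generated module in `T^⊥` is generated by the tilting module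
`T`, with kernel again in `T^⊥`. -/
theorem IsTilting.exists_shortExact_of_extVanish (R : Type u) [CommRing R] [IsArtinianRing R]
    {A : Type u} [Ring A] [Algebra R A] [Module.Finite R A] {T Y : ModuleCat.{u} A}
    (hT : IsTilting T) [Module.Finite A Y] (hY : ExtVanish T Y) :
    ∃ (K G : ModuleCat.{u} A) (f : K →ₗ[A] G) (g : G →ₗ[A] Y),
      ShortExact f g ∧ InP G ∧ ExtVanish T K := by
  have hT' := hT
  obtain ⟨hfin, hpd, hTT, hA⟩ := hT'
  obtain ⟨k, g, hg⟩ := exists_pi_approximation R T Y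
  have hadd := inAddOf_pi T k
  have hsurj : Function.Surjective g := by
    intro y
    obtain ⟨C, f, h, ⟨m, F, hF, s, r, hrs⟩, hfh⟩ :=
      hA.exists_factorization hY (LinearMap.toSpanSingleton A Y y)
    obtain rfl : F = fun _ => T := funext hF
    have hrange : ∀ x, h (r x) ∈ LinearMap.range g := by
      intro x
      induction x using DirectSum.induction_on with
      | zero => simp
      | of i x =>
        obtain ⟨l, hl⟩ := hg (h ∘ₗ r ∘ₗ DirectSum.lof A (Fin m) (fun _ => T) i)
        exact ⟨l x, LinearMap.congr_fun hl x⟩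
      | add x y hx hy =>
        rw [map_add, map_add]
        exact Submodule.add_mem _ hx hy
    have hy : h (r (s (f 1))) = y := by
      rw [show r (s (f 1)) = f 1 from LinearMap.congr_fun hrs _]
      simpa using LinearMap.congr_fun hfh (1 : A)
    exact hy ▸ hrange _
  have hse := shortExact_ker (M := ModuleCat.of A (Fin k → T)) g hsurj
  refine ⟨_, _, _, _, hse, hadd.inP ⟨hfin, hpd⟩, (extVanish_iff _ _).2 fun i => ?_⟩
  have hG := (extVanish_iff _ _).1 (hadd.extVanish_right hTT)
  cases i with
  | zero =>
    refine hse.shortExact.subsingleton_ext_one_of_lift T (hG 0) fun t => ?_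
    obtain ⟨l, hl⟩ := hg t.hom
    exact ⟨ModuleCat.ofHom l, ModuleCat.hom_ext hl⟩
  | succ i =>
    exact hse.shortExact.subsingleton_ext_X₁_right T (i + 1) ((extVanish_iff _ _).1 hY i)
      (hG (i + 1))

/-- Every finitely generated module `M` with `Ext^i(T, M) = 0` for large `i` is the cokernel of an
injection from a module in `T^⊥` to a finitely generated module of finite projective dimension. -/
theorem IsTilting.exists_shortExact (R : Type u) [CommRing R] [IsArtinianRing R]
    {A : Type u} [Ring A] [Algebra R A] [Module.Finite R A] {T : ModuleCat.{u} A}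
    (hT : IsTilting T) (n : ℕ) (M : ModuleCat.{u} A) [hM : Module.Finite A M]
    (h : ∀ i, n ≤ i → Subsingleton (Abelian.Ext.{u} T M (i + 1))) :
    ∃ (Y X : ModuleCat.{u} A) (f : Y →ₗ[A] X) (g : X →ₗ[A] M),
      ShortExact f g ∧ InP X ∧ ExtVanish T Y := by
  induction n generalizing M with
  | zero =>
    exact hT.exists_shortExact_of_extVanish R ((extVanish_iff T M).2 fun i => h i i.zero_le)
  | succ n ih =>
    have : IsNoetherianRing A := IsNoetherianRing.of_finite R A
    obtain ⟨I, ι, hι, hI, hfin⟩ := exists_finite_injective_of_artinAlgebra R M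
    let q := (LinearMap.range ι.hom).mkQ
    have hse : ShortExact (M₃ := ModuleCat.of A (I ⧸ LinearMap.range ι.hom)) ι.hom q :=
      ⟨(ModuleCat.mono_iff_injective ι).1 hι, LinearMap.exact_map_mkQ_range ι.hom,
        Submodule.mkQ_surjective _⟩
    obtain ⟨Y, X, f, g, hfg, hX, hY⟩ := ih (ModuleCat.of A (I ⧸ LinearMap.range ι.hom))
      (hM := inferInstanceAs (Module.Finite A (I ⧸ LinearMap.range ι.hom))) fun i hi =>
        hse.shortExact.subsingleton_ext_X₃_right T (i + 1)
          (Abelian.Ext.subsingleton_of_injective _ _ _) (h (i + 1) (by lia))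
    have := hX.1
    obtain ⟨Z, i, p, i', p', hip, hip'⟩ := hse.exists_pullback hfg
    have hZ : Module.Finite A Z := Module.Finite.of_exact hip.2.1 hip.2.2
    have hTZ : ExtVanish T Z := (extVanish_iff T Z).2 fun i =>
      hip'.shortExact.subsingleton_ext_X₂_right T (i + 1) ((extVanish_iff T Y).1 hY i)
        (Abelian.Ext.subsingleton_of_injective _ _ _)
    obtain ⟨K, G, k, r, hkr, hG, hK⟩ := hT.exists_shortExact_of_extVanish R hTZ
    obtain ⟨P, j, j', r', hj, hj'⟩ := hkr.exists_ker_comp hip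
    exact ⟨K, P, j', r', hj', InP.of_kernel hj hG hX, hK⟩

end Approximations

/-- If `T` is a finitely generated tilting module with `T^⊥ = 𝒫^⊥`, then `𝒫` is
contravariantly finite and `findim Λ = pd T`. -/
theorem stmt_12 (Λ : Type u) [Ring Λ] (R : Type u) [CommRing R] [IsArtinianRing R]
    [Algebra R Λ] [Module.Finite R Λ]
    (T : ModuleCat.{u} Λᵐᵒᵖ) (htilt : IsTilting T)
    (hperp : ∀ M : ModuleCat.{u} Λᵐᵒᵖ, ExtVanish T M ↔ InPerpOf InP M) :
    ContravariantlyFinite (fun M : ModuleCat.{u} Λᵐᵒᵖ => InP M) ∧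
      findim Λᵐᵒᵖ = projDim T := by
  have : Module.Finite R Λᵐᵒᵖ := Module.Finite.equiv (MulOpposite.opLinearEquiv R)
  obtain ⟨hfin, ⟨n, hn⟩, -, -⟩ := id htilt
  refine ⟨fun M hM => ?_, le_antisymm ?_ ?_⟩
  · obtain ⟨Y, X, f, g, hfg, hX, hY⟩ := htilt.exists_shortExact R n M fun i hi =>
      (subsingleton_ext_succ_iff T M i).1 (hn (i + 1) (by lia) M)
    refine ⟨X, g, hX, fun N hN t => ?_⟩
    obtain ⟨l, hl⟩ := hfg.shortExact.exists_lift
      ((extVanish_iff N Y).1 ((hperp Y).1 hY N hN) 0) (ModuleCat.ofHom t)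
    exact ⟨l.hom, congrArg ModuleCat.Hom.hom hl⟩
  · refine sSup_le ?_
    rintro _ ⟨M, hM, rfl⟩
    refine le_sInf ?_
    rintro _ ⟨m, rfl, hm⟩
    exact sInf_le ⟨m, rfl, hm.of_extVanish fun N hN => (hperp N).1 hN M hM⟩
  · exact le_sSup ⟨T, ⟨hfin, n, hn⟩, rfl⟩
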